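/- Let f be a smooth frame on ℝ⁴ and for λ > 0 define ê λ 0 = f 0 and ê λ i = λ^{-1/2} • f i for i = 1, 2, 3. Then, pointwise in x as λ → 0⁺: (i) (ê λ)* 0 x → f* 0 x, λ^{-1/2} • (ê λ)* i x → f* i x, ê λ 0 x → f 0 x, and √λ • ê λ i x → f i x for i = 1, 2, 3 (in fact all four families are constant in λ); (ii) the metric g λ x = Σ_i η i * ((ê λ)* i x ⊗ (ê λ)* i x) converges to f* 0 x ⊗ f* 0 x; and (iii) the rescaled inverse metric λ • Σ_i η i * (ê λ i x ⊗ ê λ i x) converges to −Σ_{i=1}^{3} f i x ⊗ f i x, where η 0 = 1, η 1 = η 2 = η 3 = −1. Hence the counterexample family satisfies both the frame convergence conditions and Malament's metric convergence conditions C1 and C2. -/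

import Mathlib

noncomputable section

open Filter Topology

/-- ℝ⁴, modelled as `Fin 4 → ℝ`. -/
abbrev E4 : Type := Fin 4 → ℝ

/-- Coordinate partial derivative `∂_b g (x)`. -/
def pd (g : E4 → E4) (b : Fin 4) (x : E4) : E4 :=
  fderiv ℝ g x (Pi.single b 1)

/-- `fs` is the dual coframe of the frame `f`. -/
def IsDualCoframe (f fs : Fin 4 → (E4 → E4)) : Prop :=
  ∀ (x : E4) (i j : Fin 4), (∑ a, fs i x a * f j x a) = if i = j then 1 else 0

/-- A smooth frame on ℝ⁴: four smooth vector fields forming a basis at every point. -/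
def IsSmoothFrame (f : Fin 4 → (E4 → E4)) : Prop :=
  (∀ i, ContDiff ℝ (⊤ : ℕ∞) (f i)) ∧ ∀ x : E4, LinearIndependent ℝ (fun i => f i x)

/-- Connecting field `C_f x a b c = Σ_i (f* i x) c * ∂_b (f i)^a (x)` of the frame `f`
with dual coframe `fs`. -/
def conn (f fs : Fin 4 → (E4 → E4)) (x : E4) (a b c : Fin 4) : ℝ :=
  ∑ i, fs i x c * pd (f i) b x a

/-- Torsion of the connecting field of the frame `f` with dual coframe `fs`. -/
def torsion (f fs : Fin 4 → (E4 → E4)) (x : E4) (a b c : Fin 4) : ℝ :=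
  conn f fs x a b c - conn f fs x a c b

/-- Lie bracket of vector fields on ℝ⁴. -/
def lie (X Y : E4 → E4) (x : E4) : E4 :=
  fderiv ℝ Y x (X x) - fderiv ℝ X x (Y x)

/-- Outer product `(v ⊗ w) a b = v a * w b`. -/
def outer (v w : E4) : Matrix (Fin 4) (Fin 4) ℝ := fun a b => v a * w b

/-- Minkowski signs: `η 0 = 1`, `η 1 = η 2 = η 3 = −1`. -/
def eta : Fin 4 → ℝ := fun i => if i = 0 then 1 else -1

lemma dual_unique (f fs : Fin 4 → (E4 → E4)) (h : IsDualCoframe f fs) (x v w : E4)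
    (hv : ∀ j, (∑ a, v a * f j x a) = ∑ a, w a * f j x a) : v = w := by
  let F : Matrix (Fin 4) (Fin 4) ℝ := Matrix.of fun i a => fs i x a
  let M : Matrix (Fin 4) (Fin 4) ℝ := Matrix.of fun a j => f j x a
  have h1 : F * M = 1 := by
    ext i j
    simp only [Matrix.mul_apply, Matrix.one_apply, F, M, Matrix.of_apply]
    exact h x i j
  have h2 : M * F = 1 := mul_eq_one_comm.mp h1
  have h3 : Matrix.vecMul v M = Matrix.vecMul w M := by
    ext j
    exact hv j
  have h4 := congrArg (fun u => Matrix.vecMul u F) h3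
  simpa [Matrix.vecMul_vecMul, h2] using h4

/-- the counterexample family `ê λ 0 = f 0`, `ê λ i = λ^{-1/2} • f i`
(i = 1,2,3) satisfies the frame convergence conditions (all relevant rescaled families
being constant in λ) as well as Malament's metric convergence conditions C1 and C2. -/
theorem stmt9
    (f fs : Fin 4 → (E4 → E4))
    (hframe : IsSmoothFrame f)
    (hdual : IsDualCoframe f fs)
    (eh : ℝ → Fin 4 → (E4 → E4))
    (heh0 : ∀ l : ℝ, eh l 0 = f 0)
    (hehi : ∀ l : ℝ, ∀ i : Fin 4, i ≠ 0 → eh l i = (Real.sqrt l)⁻¹ • f i)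
    (ehs : ℝ → Fin 4 → (E4 → E4))
    (hehs : ∀ l : ℝ, 0 < l → IsDualCoframe (eh l) (ehs l)) :
    -- (i) the four rescaled families are constant in λ ...
    (∀ l : ℝ, 0 < l → ∀ x : E4,
      ehs l 0 x = fs 0 x ∧
      (∀ i : Fin 4, i ≠ 0 → (Real.sqrt l)⁻¹ • ehs l i x = fs i x) ∧
      eh l 0 x = f 0 x ∧
      (∀ i : Fin 4, i ≠ 0 → Real.sqrt l • eh l i x = f i x)) ∧
    -- ... and in particular converge pointwise as λ → 0⁺
    (∀ x : E4,
      Tendsto (fun l : ℝ => ehs l 0 x) (nhdsWithin 0 (Set.Ioi 0)) (nhds (fs 0 x)) ∧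
      (∀ i : Fin 4, i ≠ 0 →
        Tendsto (fun l : ℝ => (Real.sqrt l)⁻¹ • ehs l i x) (nhdsWithin 0 (Set.Ioi 0))
          (nhds (fs i x))) ∧
      Tendsto (fun l : ℝ => eh l 0 x) (nhdsWithin 0 (Set.Ioi 0)) (nhds (f 0 x)) ∧
      (∀ i : Fin 4, i ≠ 0 →
        Tendsto (fun l : ℝ => Real.sqrt l • eh l i x) (nhdsWithin 0 (Set.Ioi 0))
          (nhds (f i x)))) ∧
    -- (ii) metric condition C1: g λ x → (f* 0 x) ⊗ (f* 0 x)
    (∀ x : E4,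
      Tendsto (fun l : ℝ => ∑ i, eta i • outer (ehs l i x) (ehs l i x))
        (nhdsWithin 0 (Set.Ioi 0)) (nhds (outer (fs 0 x) (fs 0 x)))) ∧
    -- (iii) metric condition C2: λ • (inverse metric) x → −Σ_{i=1}^{3} (f i x) ⊗ (f i x)
    (∀ x : E4,
      Tendsto (fun l : ℝ => l • ∑ i, eta i • outer (eh l i x) (eh l i x))
        (nhdsWithin 0 (Set.Ioi 0))
        (nhds (-∑ i ∈ ({1, 2, 3} : Finset (Fin 4)), outer (f i x) (f i x)))) := by
  have key : ∀ l : ℝ, 0 < l → ∀ x : E4,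
      ehs l 0 x = fs 0 x ∧
      (∀ i : Fin 4, i ≠ 0 → (Real.sqrt l)⁻¹ • ehs l i x = fs i x) ∧
      eh l 0 x = f 0 x ∧
      (∀ i : Fin 4, i ≠ 0 → Real.sqrt l • eh l i x = f i x) := by
    intro l hl x
    have hs : Real.sqrt l ≠ 0 := (Real.sqrt_pos.mpr hl).ne'
    have hF : ∀ i : Fin 4, i ≠ 0 → Real.sqrt l • eh l i x = f i x := by
      intro i hi
      rw [hehi l i hi, Pi.smul_apply, smul_smul, mul_inv_cancel₀ hs, one_smul]
    refine ⟨?_, ?_, by rw [heh0], hF⟩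
    · refine dual_unique f fs hdual x _ _ fun j => ?_
      rw [hdual x 0 j]
      by_cases hj : j = 0
      · subst hj
        rw [← heh0 l]
        exact hehs l hl x 0 0
      · have h := hehs l hl x 0 j
        rw [if_neg (Ne.symm hj)] at h ⊢
        rw [← hF j hj]
        calc _ = Real.sqrt l * ∑ a, ehs l 0 x a * eh l j x a := by
              rw [Finset.mul_sum]
              refine Finset.sum_congr rfl fun a _ => ?_
              simp only [Pi.smul_apply, smul_eq_mul]
              ring
          _ = 0 := by rw [h, mul_zero]
    · intro i hi
      refine dual_unique f fs hdual x _ _ fun j => ?_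
      rw [hdual x i j]
      have h := hehs l hl x i j
      by_cases hj : j = 0
      · subst hj
        rw [if_neg hi] at h ⊢
        rw [← heh0 l]
        calc _ = (Real.sqrt l)⁻¹ * ∑ a, ehs l i x a * eh l 0 x a := by
              rw [Finset.mul_sum]
              refine Finset.sum_congr rfl fun a _ => ?_
              simp only [Pi.smul_apply, smul_eq_mul]
              ring
          _ = 0 := by rw [h, mul_zero]
      · rw [← h, ← hF j hj]
        refine Finset.sum_congr rfl fun a _ => ?_
        simp only [Pi.smul_apply, smul_eq_mul]
        field_simp
  refine ⟨key, fun x => ⟨?_, fun i hi => ?_, ?_, fun i hi => ?_⟩, fun x => ?_, fun x => ?_⟩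
  · refine tendsto_const_nhds.congr' ?_
    filter_upwards [self_mem_nhdsWithin] with l hl
    exact (key l hl x).1.symm
  · refine tendsto_const_nhds.congr' ?_
    filter_upwards [self_mem_nhdsWithin] with l hl
    exact ((key l hl x).2.1 i hi).symm
  · refine tendsto_const_nhds.congr' ?_
    filter_upwards [self_mem_nhdsWithin] with l hl
    exact (key l hl x).2.2.1.symm
  · refine tendsto_const_nhds.congr' ?_
    filter_upwards [self_mem_nhdsWithin] with l hl
    exact ((key l hl x).2.2.2 i hi).symm
  · have hc : Continuous fun l : ℝ => outer (fs 0 x) (fs 0 x) -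
        l • ∑ i ∈ ({1, 2, 3} : Finset (Fin 4)), outer (fs i x) (fs i x) := by fun_prop
    have ht := (hc.tendsto 0).mono_left (nhdsWithin_le_nhds (s := Set.Ioi 0))
    rw [zero_smul, sub_zero] at ht
    refine ht.congr' ?_
    filter_upwards [self_mem_nhdsWithin] with l hl
    have hl' : 0 < l := hl
    have hs : Real.sqrt l ≠ 0 := (Real.sqrt_pos.mpr hl').ne'
    have hsq : Real.sqrt l * Real.sqrt l = l := Real.mul_self_sqrt hl'.le
    have h0 := (key l hl x).1
    have hi : ∀ i : Fin 4, i ≠ 0 → outer (ehs l i x) (ehs l i x) =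
        l • outer (fs i x) (fs i x) := by
      intro i hi
      have : ehs l i x = Real.sqrt l • fs i x := by
        rw [← (key l hl x).2.1 i hi, smul_smul, mul_inv_cancel₀ hs, one_smul]
      rw [this]
      ext a b
      simp only [outer, Pi.smul_apply, Matrix.smul_apply, smul_eq_mul]
      linear_combination (fs i x a * fs i x b) * hsq
    rw [Fin.sum_univ_four, h0, hi 1 (by decide), hi 2 (by decide), hi 3 (by decide)]
    ext a b
    simp [eta]
    ring
  · have hc : Continuous fun l : ℝ => l • outer (f 0 x) (f 0 x) -
        ∑ i ∈ ({1, 2, 3} : Finset (Fin 4)), outer (f i x) (f i x) := by fun_prop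
    have ht := (hc.tendsto 0).mono_left (nhdsWithin_le_nhds (s := Set.Ioi 0))
    rw [zero_smul, zero_sub] at ht
    refine ht.congr' ?_
    filter_upwards [self_mem_nhdsWithin] with l hl
    have hl' : 0 < l := hl
    have hsq : Real.sqrt l * Real.sqrt l = l := Real.mul_self_sqrt hl'.le
    have hi : ∀ i : Fin 4, i ≠ 0 → outer (f i x) (f i x) =
        l • outer (eh l i x) (eh l i x) := by
      intro i hi
      rw [← (key l hl x).2.2.2 i hi]
      ext a b
      simp only [outer, Pi.smul_apply, Matrix.smul_apply, smul_eq_mul]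
      linear_combination (eh l i x a * eh l i x b) * hsq
    rw [Fin.sum_univ_four, heh0]
    have e : ∑ i ∈ ({1, 2, 3} : Finset (Fin 4)), outer (f i x) (f i x) =
        outer (f 1 x) (f 1 x) + (outer (f 2 x) (f 2 x) + outer (f 3 x) (f 3 x)) := by
      simp
    rw [e, hi 1 (by decide), hi 2 (by decide), hi 3 (by decide)]
    ext a b
    simp [eta]
    ring
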